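/- arXiv:2505.15178 — 2 statements merged into one kernel-verified Lean document; each statement's English description precedes it below -/
import Mathlib

section
/- Fix θ₀ ∈ E. Suppose each map θ ↦ q θ i is twice continuously differentiable in a neighborhood of θ₀ (ContDiffAt ℝ 2), q θ₀ i > 0, and ∑_i q θ i = 1 for all θ in a neighborhood of θ₀. Define C(θ) = ∑_i q θ₀ i * Real.log (q θ₀ i / q θ i). Then C is locally given by half the Fisher quadratic form: the function θ ↦ C(θ) − (1/2) ∑_i q θ₀ i * (fderiv ℝ (fun θ' => Real.log (q θ' i)) θ₀ (θ − θ₀))² is o(‖θ − θ₀‖²) as θ → θ₀. -/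
open scoped BigOperators

/-!
With `ℓ i θ = log (q θ i)` and `u i = ℓ i θ - ℓ i θ₀`, conservation of the total mass lets one add
`∑ i, (q θ i - q θ₀ i) = 0` to the divergence, which becomes `∑ i, q θ₀ i * (exp (u i) - 1 - u i)`.
The first-order terms have cancelled, so first-order information on `ℓ i` suffices:
`exp u - 1 - u = u ^ 2 / 2 + o(u ^ 2)`, and the linearization of `u i` may be substituted for it in
the square.
-/

open Asymptotics Filter Topology

lemma isLittleO_sq_sub_sq {α R 𝕜 : Type*} [SeminormedRing R] [NormedDivisionRing 𝕜]
    {l : Filter α} {f g : α → R} {k : α → 𝕜}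
    (hfg : (fun x => f x - g x) =o[l] k) (hg : g =O[l] k) :
    (fun x => f x ^ 2 - g x ^ 2) =o[l] fun x => k x ^ 2 := by
  have hf : f =O[l] k := (hfg.isBigO.add hg).congr_left fun x => sub_add_cancel (f x) (g x)
  refine ((hf.mul_isLittleO hfg).add (hfg.mul_isBigO hg)).congr (fun x => ?_) fun x => ?_
  · noncomm_ring
  · exact (sq (k x)).symm

lemma isLittleO_sq_sub_sq_of_hasFDerivAt {𝕜 E A : Type*} [NontriviallyNormedField 𝕜]
    [SeminormedAddCommGroup E] [NormedSpace 𝕜 E] [SeminormedRing A] [NormedAlgebra 𝕜 A]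
    {g : E → A} {g' : E →L[𝕜] A} {a : E} (hg : HasFDerivAt g g' a) :
    (fun x => (g x - g a) ^ 2 - g' (x - a) ^ 2) =o[𝓝 a] fun x => ‖x - a‖ ^ 2 :=
  isLittleO_sq_sub_sq hg.isLittleO.norm_right (g'.isBigO_sub (𝓝 a) a).norm_right

lemma isLittleO_exp_sub_one_sub_self_sub_sq_div_two :
    (fun u : ℝ => Real.exp u - 1 - u - u ^ 2 / 2) =o[𝓝 0] fun u => u ^ 2 := by
  refine (Real.exp_sub_sum_range_succ_isLittleO_pow 2).congr_left fun u => ?_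
  simp only [Finset.sum_range_succ, Finset.sum_range_zero, Nat.factorial]
  push_cast
  ring

section

variable {E : Type*} [NormedAddCommGroup E] [NormedSpace ℝ E] {a : E}

lemma isLittleO_exp_sub_quadratic_of_hasFDerivAt {g : E → ℝ} {g' : E →L[ℝ] ℝ}
    (hg : HasFDerivAt g g' a) :
    (fun x => Real.exp (g x - g a) - 1 - (g x - g a) - g' (x - a) ^ 2 / 2)
      =o[𝓝 a] fun x => ‖x - a‖ ^ 2 := by
  have increment_tendsto : Tendsto (fun x => g x - g a) (𝓝 a) (𝓝 0) :=
    tendsto_sub_nhds_zero_iff.2 hg.continuousAt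
  have exp_remainder : (fun x => Real.exp (g x - g a) - 1 - (g x - g a) - (g x - g a) ^ 2 / 2)
      =o[𝓝 a] fun x => ‖x - a‖ ^ 2 :=
    (isLittleO_exp_sub_one_sub_self_sub_sq_div_two.comp_tendsto increment_tendsto).trans_isBigO
      (hg.isBigO_sub.norm_right.pow 2)
  have linearized_sq := (isLittleO_sq_sub_sq_of_hasFDerivAt hg).const_mul_left (1 / 2)
  exact (exp_remainder.add linearized_sq).congr_left fun x => by ring

lemma isLittleO_mul_log_div_add_sub_sub_fderiv_log_sq {f : E → ℝ}
    (hf : DifferentiableAt ℝ f a) (ha : 0 < f a) :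
    (fun x => f a * Real.log (f a / f x) + (f x - f a) -
        (1 / 2) * (f a * fderiv ℝ (fun y => Real.log (f y)) a (x - a) ^ 2))
      =o[𝓝 a] fun x => ‖x - a‖ ^ 2 := by
  have log_expansion := isLittleO_exp_sub_quadratic_of_hasFDerivAt (hf.log ha.ne').hasFDerivAt
  refine (log_expansion.const_mul_left (f a)).congr' ?_ .rfl
  filter_upwards [hf.continuousAt.eventually_const_lt ha] with x hx
  have exp_log_increment : f a * Real.exp (Real.log (f x) - Real.log (f a)) = f x := by
    rw [Real.exp_sub, Real.exp_log hx, Real.exp_log ha, mul_div_cancel₀ _ ha.ne']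
  rw [Real.log_div ha.ne' hx.ne']
  linear_combination exp_log_increment

end

theorem selfKL_second_order_expansion_general {E : Type*} [NormedAddCommGroup E]
    [NormedSpace ℝ E] {ι : Type*} [Fintype ι] (q : E → ι → ℝ) (θ₀ : E)
    (hq_diff : ∀ i, DifferentiableAt ℝ (fun θ => q θ i) θ₀)
    (hq_pos : ∀ i, 0 < q θ₀ i)
    (hq_sum : ∀ᶠ θ in 𝓝 θ₀, ∑ i, q θ i = ∑ i, q θ₀ i) :
    (fun θ => (∑ i, q θ₀ i * Real.log (q θ₀ i / q θ i)) -
        (1 / 2) * ∑ i, q θ₀ i *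
          (fderiv ℝ (fun θ' => Real.log (q θ' i)) θ₀ (θ - θ₀)) ^ 2)
      =o[𝓝 θ₀] fun θ => ‖θ - θ₀‖ ^ 2 := by
  have sum_expansion := IsLittleO.sum (s := Finset.univ) fun i _ =>
    isLittleO_mul_log_div_add_sub_sub_fderiv_log_sq (hq_diff i) (hq_pos i)
  refine sum_expansion.congr' ?_ .rfl
  filter_upwards [hq_sum] with θ hθ
  simp only [Finset.sum_apply, Finset.sum_sub_distrib, Finset.sum_add_distrib, Finset.mul_sum, hθ,
    sub_self, add_zero]

/-- Second-order expansion of the self-referenced discrete KL divergence: near `θ₀`,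
`D_KL(q θ₀ ∥ q θ)` equals half the Fisher quadratic form up to `o(‖θ − θ₀‖²)`. -/
theorem selfKL_second_order_expansion {E : Type*} [NormedAddCommGroup E] [NormedSpace ℝ E]
    {ι : Type*} [Fintype ι] (q : E → ι → ℝ) (θ₀ : E)
    (hq_smooth : ∀ i, ContDiffAt ℝ 2 (fun θ => q θ i) θ₀)
    (hq_pos : ∀ i, 0 < q θ₀ i)
    (hq_sum : ∀ᶠ θ in nhds θ₀, ∑ i, q θ i = 1) :
    (fun θ => (∑ i, q θ₀ i * Real.log (q θ₀ i / q θ i)) -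
        (1 / 2) * ∑ i, q θ₀ i *
          (fderiv ℝ (fun θ' => Real.log (q θ' i)) θ₀ (θ - θ₀)) ^ 2)
      =o[nhds θ₀] fun θ => ‖θ - θ₀‖ ^ 2 :=
  selfKL_second_order_expansion_general q θ₀
    (fun i => (hq_smooth i).differentiableAt two_ne_zero) hq_pos
    (hq_sum.mono fun _ hθ => hθ.trans hq_sum.self_of_nhds.symm)
end

section
/- Let E be a real finite-dimensional inner product space and f : E → ℝ differentiable with affine gradient: there is a continuous linear equivalence H : E ≃L[ℝ] E such that gradient f θ = gradient f θ' + H (θ − θ') for all θ, θ' ∈ E. Let g, g', h' : E → ℝ. If θ_* is a local minimum of f + g with g differentiable at θ_*, and θ_k is a local minimum of f + g' + h' with g', h' differentiable at θ_k, then θ_k − θ_* = H.symm (gradient g θ_* − gradient g' θ_k − gradient h' θ_k). -/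
theorem gradient_fun_add {𝕜 F : Type*} [RCLike 𝕜] [NormedAddCommGroup F]
    [InnerProductSpace 𝕜 F] [CompleteSpace F] {u v : F → 𝕜} {x : F}
    (hu : DifferentiableAt 𝕜 u x) (hv : DifferentiableAt 𝕜 v x) :
    gradient (fun y => u y + v y) x = gradient u x + gradient v x := by
  simp only [gradient, fderiv_fun_add hu hv, map_add]

section LocalExtr

variable {E : Type*} [NormedAddCommGroup E] [InnerProductSpace ℝ E] [CompleteSpace E]

theorem gradient_eq_zero_of_isLocalExtr {u : E → ℝ} {x : E} (hx : IsLocalExtr u x) :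
    gradient u x = 0 := by
  rw [gradient, hx.fderiv_eq_zero, map_zero]

theorem gradient_eq_neg_of_isLocalExtr_add {f u : E → ℝ} {x : E}
    (hx : IsLocalExtr (fun y => f y + u y) x)
    (hf : DifferentiableAt ℝ f x) (hu : DifferentiableAt ℝ u x) :
    gradient f x = -gradient u x := by
  rw [eq_neg_iff_add_eq_zero, ← gradient_fun_add hf hu]
  exact gradient_eq_zero_of_isLocalExtr hx

/-- For a non-quadratic `C²` loss `f`, one may take for `H` the Hessian of `f` averaged over the
segment from `x` to `y`, whenever this average is invertible. -/
theorem parameter_difference_formula_general {f u v : E → ℝ} {x y : E} (H : E ≃L[ℝ] E)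
    (hsecant : gradient f y = gradient f x + H (y - x))
    (hx : IsLocalExtr (fun z => f z + u z) x)
    (hfx : DifferentiableAt ℝ f x) (hux : DifferentiableAt ℝ u x)
    (hy : IsLocalExtr (fun z => f z + v z) y)
    (hfy : DifferentiableAt ℝ f y) (hvy : DifferentiableAt ℝ v y) :
    y - x = H.symm (gradient u x - gradient v y) := by
  rw [ContinuousLinearEquiv.eq_symm_apply]
  calc
    H (y - x) = gradient f y - gradient f x := eq_sub_of_add_eq' hsecant.symm
    _ = -gradient v y - -gradient u x := by
      rw [gradient_eq_neg_of_isLocalExtr_add hx hfx hux,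
        gradient_eq_neg_of_isLocalExtr_add hy hfy hvy]
    _ = gradient u x - gradient v y := neg_sub_neg _ _

end LocalExtr

/-- Exact parameter-difference formula: with an affine-gradient remaining loss `f`
(with invertible Hessian `H`), the two local optimality conditions give
`θ_k − θ_* = H⁻¹ (∇g(θ_*) − ∇g'(θ_k) − ∇h'(θ_k))`. -/
theorem parameter_difference_formula {E : Type*} [NormedAddCommGroup E]
    [InnerProductSpace ℝ E] [FiniteDimensional ℝ E]
    (f : E → ℝ) (hf : Differentiable ℝ f) (H : E ≃L[ℝ] E)
    (hgrad : ∀ θ θ' : E, gradient f θ = gradient f θ' + H (θ - θ'))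
    (g g' h' : E → ℝ) (θs θk : E)
    (hmin_star : IsLocalMin (fun θ => f θ + g θ) θs)
    (hg_star : DifferentiableAt ℝ g θs)
    (hmin_k : IsLocalMin (fun θ => f θ + g' θ + h' θ) θk)
    (hg'_k : DifferentiableAt ℝ g' θk) (hh'_k : DifferentiableAt ℝ h' θk) :
    θk - θs = H.symm (gradient g θs - gradient g' θk - gradient h' θk) := by
  simp only [add_assoc] at hmin_k
  rw [sub_sub, ← gradient_fun_add hg'_k hh'_k]
  exact parameter_difference_formula_general H (hgrad θk θs) (.inl hmin_star) (hf θs) hg_star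
    (.inl hmin_k) (hf θk) (hg'_k.fun_add hh'_k)
end
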